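/- Let (L, E, U) be an LEU-decomposition of an n×n matrix A over F (with I = J = 𝟙). Then the matrix ℰ_n A admits a generalized Bruhat decomposition ℰ_n A = V₁ w V₂, where V₁ = ℰ_n (L⁻¹ − (𝟙 − I_E)) ℰ_n and V₂ = U⁻¹ − (𝟙 − J_E) are upper triangular matrices and w = ℰ_n (E + Ē) is a permutation matrix. -/

import Mathlib

open Matrix

/-- `P_n`: matrices all of whose entries lie in `{0,1}`, with at most one nonzero
entry in each row and at most one nonzero entry in each column. -/
def InP {F : Type*} [Field F] {m : Type*} (E : Matrix m m F) : Prop :=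
  (∀ i j, E i j = 0 ∨ E i j = 1) ∧
  (∀ i j k, E i j ≠ 0 → E i k ≠ 0 → j = k) ∧
  (∀ i j k, E i j ≠ 0 → E k j ≠ 0 → i = k)

/-- `D_n`: diagonal matrices with diagonal entries in `{0,1}`. -/
def InD {F : Type*} [Field F] {m : Type*} (M : Matrix m m F) : Prop :=
  M.IsDiag ∧ ∀ i, M i i = 0 ∨ M i i = 1

/-- `F_{I,J}`: the set of matrices `B` with `I * B * J = B`. -/
def InFIJ {F : Type*} [Field F] {n : ℕ} (I J B : Matrix (Fin n) (Fin n) F) : Prop :=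
  I * B * J = B

/-- `(L, E, U)` is an LEU-decomposition of `A ∈ F_{I,J}`: `A = L⁻¹ * E * U⁻¹`,
`E ∈ P_n`, `L` is an invertible lower triangular matrix, `U` is an upper
triangular matrix with unit diagonal, `L - (𝟙 - I_E) ∈ F_{I, I_E}` and
`U - (𝟙 - J_E) ∈ F_{J_E, J}`, where `I_E = E * Eᵀ` and `J_E = Eᵀ * E`. -/
def IsLEU {F : Type*} [Field F] {n : ℕ}
    (I J A L E U : Matrix (Fin n) (Fin n) F) : Prop :=
  A = L⁻¹ * E * U⁻¹ ∧ InP E ∧ IsUnit L ∧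
  (∀ i j : Fin n, i < j → L i j = 0) ∧
  (∀ i j : Fin n, j < i → U i j = 0) ∧ (∀ i, U i i = 1) ∧
  InFIJ I (E * Eᵀ) (L - (1 - E * Eᵀ)) ∧
  InFIJ (Eᵀ * E) J (U - (1 - Eᵀ * E))

/-- The number of zero rows of `E` preceding the row `i`. -/
def zeroRowsBelow {F : Type*} [Field F] [DecidableEq F] {n : ℕ}
    (E : Matrix (Fin n) (Fin n) F) (i : Fin n) : ℕ :=
  letI : ∀ i' : Fin n, Decidable (∀ k, E i' k = 0) := fun _ => inferInstance
  (Finset.univ.filter (fun i' : Fin n => i' < i ∧ ∀ k, E i' k = 0)).card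

/-- The number of zero columns of `E` preceding the column `j`. -/
def zeroColsBelow {F : Type*} [Field F] [DecidableEq F] {n : ℕ}
    (E : Matrix (Fin n) (Fin n) F) (j : Fin n) : ℕ :=
  (Finset.univ.filter (fun j' : Fin n => j' < j ∧ ∀ k, E k j' = 0)).card

/-- The complementary matrix `Ē` of `E`: it has the entry `1` exactly at the
positions `(i_k, j_k)`, where `i_1 < … < i_s` are the zero rows of `E` and
`j_1 < … < j_s` are the zero columns of `E`, and `0` elsewhere. -/
def complMat {F : Type*} [Field F] [DecidableEq F] {n : ℕ}
    (E : Matrix (Fin n) (Fin n) F) : Matrix (Fin n) (Fin n) F :=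
  Matrix.of fun i j =>
    if (∀ k, E i k = 0) ∧ (∀ k, E k j = 0) ∧ zeroRowsBelow E i = zeroColsBelow E j
    then 1 else 0

/-- A permutation matrix (an element of `S_n`). -/
def IsPermMat {F : Type*} [Field F] {m : Type*} [DecidableEq m]
    (M : Matrix m m F) : Prop :=
  ∃ σ : Equiv.Perm m, ∀ i j, M i j = if σ i = j then 1 else 0

/-- `ℰ_n`: the anti-diagonal permutation matrix, with entry `1` in positions
`(k, n+1-k)` and `0` elsewhere. -/
def antiDiag (F : Type*) [Field F] (n : ℕ) : Matrix (Fin n) (Fin n) F :=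
  Matrix.of fun i j => if j = i.rev then 1 else 0

theorem rank_inj_aux {n : ℕ} (S : Finset (Fin n)) (a b : Fin n) (ha : a ∈ S) (hb : b ∈ S)
    (h : (S.filter (· < a)).card = (S.filter (· < b)).card) : a = b := by
  have key : ∀ a b : Fin n, a ∈ S → a < b →
      (S.filter (· < a)).card < (S.filter (· < b)).card := by
    intro a b ha hab
    apply Finset.card_lt_card
    rw [Finset.ssubset_iff_of_subset]
    · exact ⟨a, by simp [ha, hab], by simp⟩
    · intro x hx
      simp only [Finset.mem_filter] at hx ⊢
      exact ⟨hx.1, hx.2.trans hab⟩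
  rcases lt_trichotomy a b with hab | hab | hab
  · have := key a b ha hab
    omega
  · exact hab
  · have := key b a hb hab
    omega

theorem rank_lt_aux {n : ℕ} (S : Finset (Fin n)) (a : Fin n) (ha : a ∈ S) :
    (S.filter (· < a)).card < S.card := by
  apply Finset.card_lt_card
  rw [Finset.ssubset_iff_of_subset (Finset.filter_subset _ _)]
  exact ⟨a, ha, by simp⟩

theorem rank_surj_aux {n : ℕ} (S : Finset (Fin n)) (k : ℕ) (hk : k < S.card) :
    ∃ a ∈ S, (S.filter (· < a)).card = k := by
  have h := Finset.surj_on_of_inj_on_of_card_le (s := S) (t := Finset.range S.card)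
    (fun a _ => (S.filter (· < a)).card)
    (fun a ha => Finset.mem_range.2 (rank_lt_aux S a ha))
    (fun a b ha hb h => rank_inj_aux S a b ha hb h) (by simp) k (Finset.mem_range.2 hk)
  obtain ⟨a, ha, h⟩ := h
  exact ⟨a, ha, h.symm⟩

open Classical in
theorem zeroRows_eq_aux {F : Type*} [Field F] [DecidableEq F] {n : ℕ}
    (E : Matrix (Fin n) (Fin n) F) (i : Fin n) : zeroRowsBelow E i =
    ((Finset.univ.filter (fun i' : Fin n => ∀ k, E i' k = 0)).filter (· < i)).card := by
  unfold zeroRowsBelow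
  rw [Finset.filter_filter]
  congr 1
  ext x
  simp [and_comm]

open Classical in
theorem zeroCols_eq_aux {F : Type*} [Field F] [DecidableEq F] {n : ℕ}
    (E : Matrix (Fin n) (Fin n) F) (i : Fin n) : zeroColsBelow E i =
    ((Finset.univ.filter (fun i' : Fin n => ∀ k, E k i' = 0)).filter (· < i)).card := by
  unfold zeroColsBelow
  rw [Finset.filter_filter]
  congr 1
  ext x
  simp [and_comm]

open Classical in
theorem card_zero_aux {F : Type*} [Field F] [DecidableEq F] {n : ℕ}
    (E : Matrix (Fin n) (Fin n) F) (hE : InP E) :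
    (Finset.univ.filter (fun i : Fin n => ∀ k, E i k = 0)).card =
    (Finset.univ.filter (fun i : Fin n => ∀ k, E k i = 0)).card := by
  obtain ⟨-, h2, h3⟩ := hE
  have e1 := Finset.card_filter_add_card_filter_not (s := (Finset.univ : Finset (Fin n)))
    (fun i : Fin n => ∀ k, E i k = 0)
  have e2 := Finset.card_filter_add_card_filter_not (s := (Finset.univ : Finset (Fin n)))
    (fun i : Fin n => ∀ k, E k i = 0)
  have e3 : (Finset.univ.filter (fun i : Fin n => ¬ ∀ k, E i k = 0)).card =
      (Finset.univ.filter (fun i : Fin n => ¬ ∀ k, E k i = 0)).card := by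
    have hc : ∀ i : Fin n, ∃ j, (¬ ∀ k, E i k = 0) → E i j ≠ 0 := by
      intro i
      by_cases h : ∀ k, E i k = 0
      · exact ⟨i, fun h' => (h' h).elim⟩
      · push Not at h
        obtain ⟨j, hj⟩ := h
        exact ⟨j, fun _ => hj⟩
    choose f hf using hc
    apply Finset.card_bij (fun i _ => f i)
    · intro i hi
      simp only [Finset.mem_filter, Finset.mem_univ, true_and] at hi ⊢
      exact fun h => hf i hi (h i)
    · intro i hi j hj hij
      simp only [Finset.mem_filter, Finset.mem_univ, true_and] at hi hj
      have a := hf i hi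
      rw [hij] at a
      exact h3 _ _ _ a (hf j hj)
    · intro j hj
      simp only [Finset.mem_filter, Finset.mem_univ, true_and] at hj
      push Not at hj
      obtain ⟨i, hi⟩ := hj
      have hi' : ¬ ∀ k, E i k = 0 := fun h => hi (h j)
      exact ⟨i, by simpa using hi', h2 _ _ _ (hf i hi') hi⟩
  omega

open Classical in
theorem perm_aux {F : Type*} [Field F] [DecidableEq F] {n : ℕ}
    (E : Matrix (Fin n) (Fin n) F) (hE : InP E) : IsPermMat (E + complMat E) := by
  have hcard := card_zero_aux E hE
  obtain ⟨h1, h2, h3⟩ := hE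
  let R : Fin n → Fin n → Prop := fun i j => E i j ≠ 0 ∨
    ((∀ k, E i k = 0) ∧ (∀ k, E k j = 0) ∧ zeroRowsBelow E i = zeroColsBelow E j)
  have hex : ∀ i, ∃ j, R i j := by
    intro i
    by_cases h : ∀ k, E i k = 0
    · have hlt := rank_lt_aux (Finset.univ.filter (fun i : Fin n => ∀ k, E i k = 0)) i
        (by simpa using h)
      rw [hcard] at hlt
      obtain ⟨j, hj, hj'⟩ := rank_surj_aux _ _ hlt
      refine ⟨j, Or.inr ⟨h, by simpa using hj, ?_⟩⟩
      rw [zeroRows_eq_aux, zeroCols_eq_aux, hj']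
    · push Not at h
      obtain ⟨j, hj⟩ := h
      exact ⟨j, Or.inl hj⟩
  have hrow : ∀ i j j', R i j → R i j' → j = j' := by
    rintro i j j' (h | ⟨a, b, c⟩) (h' | ⟨a', b', c'⟩)
    · exact h2 _ _ _ h h'
    · exact (h (a' _)).elim
    · exact (h' (a _)).elim
    · rw [c, zeroCols_eq_aux, zeroCols_eq_aux] at c'
      exact rank_inj_aux _ _ _ (by simpa using b) (by simpa using b') c'
  have hcol : ∀ i i' j, R i j → R i' j → i = i' := by
    rintro i i' j (h | ⟨a, b, c⟩) (h' | ⟨a', b', c'⟩)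
    · exact h3 _ _ _ h h'
    · exact (h (b' _)).elim
    · exact (h' (b _)).elim
    · rw [← c, zeroRows_eq_aux, zeroRows_eq_aux] at c'
      exact (rank_inj_aux _ _ _ (by simpa using a') (by simpa using a) c').symm
  choose f hf using hex
  have hinj : Function.Injective f := fun i i' h => by
    have := hf i
    rw [h] at this
    exact hcol _ _ _ this (hf i')
  refine ⟨Equiv.ofBijective f (Finite.injective_iff_bijective.1 hinj), fun i j => ?_⟩
  rw [Equiv.ofBijective_apply]
  have hiff : f i = j ↔ R i j := ⟨fun h => h ▸ hf i, fun h => hrow _ _ _ (hf i) h⟩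
  rw [Matrix.add_apply]
  simp only [hiff, complMat, Matrix.of_apply]
  rcases h1 i j with h | h
  · simp [R, h]
  · have hh : ¬ ∀ k, E i k = 0 := fun h' => by simp [h' j] at h
    have hR : R i j := Or.inl (by simp [h])
    simp [hR, h, hh]

theorem anti_mul_aux {F : Type*} [Field F] {n : ℕ} (M : Matrix (Fin n) (Fin n) F) (i j : Fin n) :
    (antiDiag F n * M) i j = M i.rev j := by
  simp [antiDiag, Matrix.mul_apply]

theorem mul_anti_aux {F : Type*} [Field F] {n : ℕ} (M : Matrix (Fin n) (Fin n) F) (i j : Fin n) :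
    (M * antiDiag F n) i j = M i j.rev := by
  have : ∀ x : Fin n, j = x.rev ↔ x = j.rev := fun x =>
    ⟨fun h => by simp [h], fun h => by simp [h]⟩
  simp [antiDiag, Matrix.mul_apply, this]

theorem anti_sq_aux {F : Type*} [Field F] {n : ℕ} : antiDiag F n * antiDiag F n = 1 := by
  ext i j
  rw [anti_mul_aux]
  simp [antiDiag, Matrix.one_apply, eq_comm]

theorem EEt_aux {F : Type*} [Field F] {n : ℕ} (E : Matrix (Fin n) (Fin n) F) (hE : InP E)
    (i j : Fin n) (h : i ≠ j) : (E * Eᵀ) i j = 0 := by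
  rw [Matrix.mul_apply]
  apply Finset.sum_eq_zero
  intro k _
  by_contra hk
  rw [Matrix.transpose_apply] at hk
  exact h (hE.2.2 _ _ _ (left_ne_zero_of_mul hk) (right_ne_zero_of_mul hk))

theorem inP_transpose_aux {F : Type*} [Field F] {n : ℕ} (E : Matrix (Fin n) (Fin n) F)
    (hE : InP E) : InP Eᵀ :=
  ⟨fun i j => hE.1 j i, fun i j k => hE.2.2 j i k, fun i j k => hE.2.1 j i k⟩

theorem EEtE_aux {F : Type*} [Field F] {n : ℕ} (E : Matrix (Fin n) (Fin n) F) (hE : InP E) :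
    E * Eᵀ * E = E := by
  ext i j
  rw [Matrix.mul_apply, Finset.sum_eq_single i]
  · rw [Matrix.mul_apply]
    rcases hE.1 i j with h | h
    · simp [h]
    · rw [Finset.sum_eq_single j]
      · simp [h]
      · intro k _ hk
        by_contra hc
        exact hk (hE.2.1 i k j (left_ne_zero_of_mul hc) (by simp [h]))
      · simp
  · intro k _ hk
    rw [EEt_aux E hE i k hk.symm, zero_mul]
  · simp

theorem Et_compl_aux {F : Type*} [Field F] [DecidableEq F] {n : ℕ}
    (E : Matrix (Fin n) (Fin n) F) : Eᵀ * complMat E = 0 := by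
  ext i j
  rw [Matrix.mul_apply]
  apply Finset.sum_eq_zero
  intro k _
  simp only [complMat, Matrix.of_apply, Matrix.transpose_apply]
  split_ifs with h
  · simp [h.1 i]
  · simp

/-- Sentence 2: if `(L,E,U)` is an LEU-decomposition of `A`, then `ℰ_n A` has the
generalized Bruhat decomposition `ℰ_n A = V₁ w V₂` with
`V₁ = ℰ_n (L⁻¹ - (𝟙 - I_E)) ℰ_n` and `V₂ = U⁻¹ - (𝟙 - J_E)` upper triangular, and
`w = ℰ_n (E + Ē)` a permutation matrix. -/
theorem bruhat_decomposition {F : Type*} [Field F] [DecidableEq F] {n : ℕ}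
    (hn : 0 < n) (A L E U : Matrix (Fin n) (Fin n) F)
    (hLEU : IsLEU 1 1 A L E U) :
    antiDiag F n * A =
      (antiDiag F n * (L⁻¹ - (1 - E * Eᵀ)) * antiDiag F n) *
        (antiDiag F n * (E + complMat E)) * (U⁻¹ - (1 - Eᵀ * E)) ∧
    (∀ i j : Fin n, j < i →
      (antiDiag F n * (L⁻¹ - (1 - E * Eᵀ)) * antiDiag F n) i j = 0) ∧
    (∀ i j : Fin n, j < i → (U⁻¹ - (1 - Eᵀ * E)) i j = 0) ∧
    IsPermMat (antiDiag F n * (E + complMat E)) := by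
  obtain ⟨hA, hE, hL, hLt, hUt, hU1, hLI, hUJ⟩ := hLEU
  have hE' := inP_transpose_aux E hE
  have hEE := EEtE_aux E hE
  unfold InFIJ at hLI hUJ
  rw [one_mul] at hLI
  rw [mul_one] at hUJ
  have hLd : IsUnit L.det := (Matrix.isUnit_iff_isUnit_det L).1 hL
  have hUT : U.BlockTriangular id := fun i j h => hUt i j h
  have hLT : L.BlockTriangular OrderDual.toDual := fun i j h => hLt i j h
  have hUd : IsUnit U.det := by
    rw [Matrix.det_of_upperTriangular hUT]
    simp [hU1]
  have hI : E * Eᵀ * (E * Eᵀ) = E * Eᵀ := by rw [← mul_assoc, hEE]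
  have hJ : Eᵀ * E * (Eᵀ * E) = Eᵀ * E := by
    rw [mul_assoc, ← mul_assoc E, hEE]
  have hL1 : L * (1 - E * Eᵀ) = 1 - E * Eᵀ := by
    have : L - (1 - E * Eᵀ) = L * (E * Eᵀ) := by
      rw [← hLI, sub_mul, sub_mul, hI, one_mul, sub_self, sub_zero]
    rw [mul_sub, mul_one, ← this]
    abel
  have hU1' : (1 - Eᵀ * E) * U = 1 - Eᵀ * E := by
    have : U - (1 - Eᵀ * E) = Eᵀ * E * U := by
      rw [← hUJ, mul_sub, mul_sub, hJ, mul_one, sub_self, sub_zero]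
    rw [sub_mul, one_mul, ← this]
    abel
  have hV1 : L⁻¹ - (1 - E * Eᵀ) = L⁻¹ * (E * Eᵀ) := by
    have : L⁻¹ * (1 - E * Eᵀ) = 1 - E * Eᵀ := by
      conv_lhs => rw [← hL1]
      rw [← mul_assoc, Matrix.nonsing_inv_mul _ hLd, one_mul]
    conv_lhs => rw [← this]
    rw [mul_sub, mul_one, sub_sub_cancel]
  have hV2 : U⁻¹ - (1 - Eᵀ * E) = Eᵀ * E * U⁻¹ := by
    have : (1 - Eᵀ * E) * U⁻¹ = 1 - Eᵀ * E := by
      conv_lhs => rw [← hU1']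
      rw [mul_assoc, Matrix.mul_nonsing_inv _ hUd, mul_one]
    conv_lhs => rw [← this]
    rw [sub_mul, one_mul, sub_sub_cancel]
  have hmid : (E * Eᵀ) * (E + complMat E) * (Eᵀ * E) = E := by
    rw [mul_add, hEE, mul_assoc E Eᵀ (complMat E), Et_compl_aux, mul_zero, add_zero,
      ← mul_assoc, hEE]
  refine ⟨?_, ?_, ?_, ?_⟩
  · rw [hV1, hV2, hA]
    calc antiDiag F n * (L⁻¹ * E * U⁻¹)
        = antiDiag F n * (L⁻¹ * ((E * Eᵀ) * (E + complMat E) * (Eᵀ * E)) * U⁻¹) := by rw [hmid]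
      _ = antiDiag F n * (L⁻¹ * (E * Eᵀ)) * (antiDiag F n * antiDiag F n) * (E + complMat E)
          * (Eᵀ * E * U⁻¹) := by rw [anti_sq_aux, mul_one]; simp only [mul_assoc]
      _ = _ := by simp only [mul_assoc]
  · intro i j hij
    have hlt : i.rev < j.rev := Fin.rev_lt_rev.2 hij
    rw [mul_anti_aux, anti_mul_aux, Matrix.sub_apply, Matrix.sub_apply,
      EEt_aux E hE _ _ hlt.ne, Matrix.one_apply_ne hlt.ne]
    haveI := hL.invertible
    have := Matrix.blockTriangular_inv_of_blockTriangular hLT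
    rw [this (show OrderDual.toDual j.rev < OrderDual.toDual i.rev from hlt)]
    simp
  · intro i j hij
    have h := EEt_aux Eᵀ hE' i j hij.ne'
    rw [Matrix.transpose_transpose] at h
    haveI := ((Matrix.isUnit_iff_isUnit_det U).2 hUd).invertible
    have := Matrix.blockTriangular_inv_of_blockTriangular hUT
    rw [Matrix.sub_apply, Matrix.sub_apply, h, Matrix.one_apply_ne hij.ne', this hij]
    simp
  · obtain ⟨σ, hσ⟩ := perm_aux E hE
    refine ⟨Fin.revPerm.trans σ, fun i j => ?_⟩
    rw [anti_mul_aux, hσ]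
    simp
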